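/- Weak convergence theorem, Case (A): with s = +1, X_t/t converges weakly to the distribution with density f_κ; that is, for every bounded continuous function g : ℝ → ℝ, lim_{t→∞} Σ_{x∈ℤ₊} P(X_t = x)·g(x/t) = ∫_0^a g(x)·f_κ(x) dx. -/

import Mathlib

open Filter Topology MeasureTheory

noncomputable section

/-- Half-line quantum walk `Ψ_t(x) = (Ψ_t^L(x), Ψ_t^R(x))` with a reflecting wall at the
origin, coin parameters `a`, `b` and wall sign `s`:
`Ψ_0(0) = (1,0)`, `Ψ_0(x) = (0,0)` for `x ≥ 1`, and
`Ψ_{t+1}^L(x) = a·Ψ_t^L(x+1) − b·Ψ_t^R(x+1)`,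
`Ψ_{t+1}^R(x) = b·Ψ_t^L(x−1) + a·Ψ_t^R(x−1)` for `x ≥ 2`,
`Ψ_{t+1}^R(1) = s·Ψ_t^L(0)`, `Ψ_{t+1}^R(0) = 0`. -/
noncomputable def psi (a b s : ℝ) : ℕ → ℕ → ℂ × ℂ
  | 0, x => if x = 0 then (1, 0) else (0, 0)
  | t + 1, x =>
      ((a : ℂ) * (psi a b s t (x + 1)).1 - (b : ℂ) * (psi a b s t (x + 1)).2,
       if x = 0 then 0
       else if x = 1 then (s : ℂ) * (psi a b s t 0).1
       else (b : ℂ) * (psi a b s t (x - 1)).1 + (a : ℂ) * (psi a b s t (x - 1)).2)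

/-- Position distribution `P(X_t = x) = |Ψ_t^L(x)|² + |Ψ_t^R(x)|²`. -/
noncomputable def prob (a b s : ℝ) (t x : ℕ) : ℝ :=
  ‖(psi a b s t x).1‖ ^ 2 + ‖(psi a b s t x).2‖ ^ 2

/-!
By parity at most one of `Ψ_t^L(n)` and `Ψ_t^R(n + 1)` is nonzero, and their sum satisfies the
scalar recurrence `y (t + 2) n + y t n = a * (y (t + 1) (n + 1) + y (t + 1) (n - 1))`, with the wall
acting as the boundary condition `y t (-1) = c * y t 0`, `c = (1 - b) / a`. Extended to all of `ℤ`,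
this recurrence has constant coefficients and is solved by Fourier series: each momentum `θ`
oscillates at the frequency `ω(θ)` with `cos ω(θ) = a cos θ`, with an amplitude that carries the
wall condition.

The extended solution has total mass `2`. By Parseval, the characteristic function of its rescaled
position is an integral over the circle of momenta. It converges to the characteristic function of
the group velocity `v(θ) = ω'(θ)` at a random momentum, because the phases
`t * (ω(θ + ξ / t) - ω(θ))` tend to `ξ * v(θ)` and the rapidly oscillating terms cancel between `θ`
and `θ + π`. By Lévy's continuity theorem the rescaled position converges weakly to that group
velocity. Restricting a symmetric law to the half-line amounts to taking absolute values, and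
substituting `y = v(θ)` gives the density.
-/

section FourierCoefficients

open AddCircle ComplexConjugate

variable {T : ℝ} [Fact (0 < T)] {f g : AddCircle T → ℂ}

theorem integrable_haarAddCircle_of_continuous {E : Type*} [NormedAddCommGroup E]
    {f : AddCircle T → E} (hf : Continuous f) : Integrable f haarAddCircle :=
  hf.integrable_of_hasCompactSupport (HasCompactSupport.of_compactSpace f)

theorem hasSum_conj_fourierCoeff_mul_fourierCoeff (hf : Continuous f) (hg : Continuous g) :
    HasSum (fun n : ℤ ↦ conj (fourierCoeff f n) * fourierCoeff g n)
      (∫ θ, conj (f θ) * g θ ∂haarAddCircle) := by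
  let toL2 (h : C(AddCircle T, ℂ)) := ContinuousMap.toLp 2 haarAddCircle ℂ h
  have inner_basis (h : C(AddCircle T, ℂ)) (n : ℤ) :
      inner ℂ (fourierBasis n) (toL2 h) = fourierCoeff h n := by
    rw [← HilbertBasis.repr_apply_apply, fourierBasis_repr, fourierCoeff_toLp]
  have parseval := fourierBasis.hasSum_inner_mul_inner (toL2 ⟨f, hf⟩) (toL2 ⟨g, hg⟩)
  rw [ContinuousMap.inner_toLp] at parseval
  simp only [← inner_conj_symm _ (fourierBasis _), inner_basis, ContinuousMap.coe_mk,
    mul_comm (g _)] at parseval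
  exact parseval

theorem fourierCoeff_comp_add_right (f : AddCircle T → ℂ) (s : AddCircle T) (n : ℤ) :
    fourierCoeff (fun θ ↦ f (θ + s)) n = fourier n s * fourierCoeff f n := by
  have shift (θ : AddCircle T) :
      fourier (-n) θ • f (θ + s) = fourier n s * (fourier (-n) (θ + s) • f (θ + s)) := by
    have inv : fourier n s * fourier (-n) s = (1 : ℂ) := by
      rw [← fourier_add, add_neg_cancel, fourier_zero]
    have mul : fourier (-n) (θ + s) = fourier (-n) θ * fourier (-n) s := by
      simp only [fourier_apply, smul_add, toCircle_add, Circle.coe_mul]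
    rw [mul, smul_eq_mul, smul_eq_mul]
    linear_combination (-fourier (-n) θ * f (θ + s)) * inv
  simp_rw [fourierCoeff, shift]
  rw [integral_const_mul, integral_add_right_eq_self (fun θ ↦ fourier (-n) θ • f θ) s]

theorem hasSum_fourier_mul_norm_sq_fourierCoeff (hf : Continuous f) (s : AddCircle T) :
    HasSum (fun n : ℤ ↦ fourier n s * (‖fourierCoeff f n‖ ^ 2 : ℝ))
      (∫ θ, conj (f θ) * f (θ + s) ∂haarAddCircle) := by
  refine (hasSum_conj_fourierCoeff_mul_fourierCoeff hf
    (hf.comp (continuous_add_const s))).congr_fun fun n ↦ ?_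
  rw [Function.comp_def, fourierCoeff_comp_add_right, mul_left_comm, Complex.conj_mul',
    Complex.ofReal_pow]

theorem hasSum_norm_sq_fourierCoeff (hf : Continuous f) :
    HasSum (fun n : ℤ ↦ ‖fourierCoeff f n‖ ^ 2) (∫ θ, ‖f θ‖ ^ 2 ∂haarAddCircle) := by
  have parseval := hasSum_fourier_mul_norm_sq_fourierCoeff hf 0
  simp only [fourier_eval_zero, one_mul, add_zero, Complex.conj_mul', ← Complex.ofReal_pow,
    integral_complex_ofReal] at parseval
  exact Complex.hasSum_ofReal.1 parseval

theorem fourierCoeff_fourier_mul (f : AddCircle T → ℂ) (m n : ℤ) :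
    fourierCoeff (fun θ ↦ fourier m θ * f θ) n = fourierCoeff f (n - m) := by
  refine integral_congr_ae (.of_forall fun θ ↦ ?_)
  simp only [smul_eq_mul]
  rw [← mul_assoc, ← fourier_add, neg_sub, neg_add_eq_sub]

theorem fourierCoeff_add_of_continuous (hf : Continuous f) (hg : Continuous g) (n : ℤ) :
    fourierCoeff (fun θ ↦ f θ + g θ) n = fourierCoeff f n + fourierCoeff g n :=
  congrFun (fourierCoeff.add (integrable_haarAddCircle_of_continuous hf)
    (integrable_haarAddCircle_of_continuous hg)) n

theorem fourierCoeff_sub_of_continuous (hf : Continuous f) (hg : Continuous g) (n : ℤ) :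
    fourierCoeff (fun θ ↦ f θ - g θ) n = fourierCoeff f n - fourierCoeff g n := by
  have add := fourierCoeff_add_of_continuous (hf.sub hg) hg n
  simp only [Pi.sub_apply, sub_add_cancel] at add
  exact eq_sub_of_add_eq add.symm

theorem fourierCoeff_neg_of_even (hf : Function.Even f) (n : ℤ) :
    fourierCoeff f (-n) = fourierCoeff f n := by
  rw [fourierCoeff, ← integral_neg_eq_self]
  refine integral_congr_ae (.of_forall fun θ ↦ ?_)
  simp only [hf θ, fourier_apply, neg_neg, smul_neg, neg_smul]

theorem norm_fourierCoeff_le (f : AddCircle T → ℂ) (n : ℤ) :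
    ‖fourierCoeff f n‖ ≤ ∫ θ, ‖f θ‖ ∂haarAddCircle := by
  refine (norm_integral_le_integral_norm _).trans_eq ?_
  simp only [norm_smul, fourier_apply, Circle.norm_coe, one_mul]

theorem integral_eq_half_integral_add_shift {E : Type*} [NormedAddCommGroup E] [NormedSpace ℝ E]
    {f : AddCircle T → E} (hf : Integrable f haarAddCircle) (s : AddCircle T) :
    ∫ θ, f θ ∂haarAddCircle = (1 / 2 : ℝ) • ∫ θ, (f θ + f (θ + s)) ∂haarAddCircle := by
  rw [integral_add hf (hf.comp_add_right s), integral_add_right_eq_self, ← two_smul ℝ,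
    smul_smul]
  norm_num

end FourierCoefficients

section AtomicMeasures

variable {ι X : Type*} [MeasurableSpace X]

/-- The measure on `X` with an atom of mass `w i` at each point `x i`, for nonnegative weights. -/
def atomicMeasure (w : ι → ℝ) (x : ι → X) : Measure X :=
  Measure.sum fun i ↦ ENNReal.ofReal (w i) • Measure.dirac (x i)

theorem isProbabilityMeasure_atomicMeasure {w : ι → ℝ} (hw : ∀ i, 0 ≤ w i) (h : HasSum w 1)
    (x : ι → X) : IsProbabilityMeasure (atomicMeasure w x) where
  measure_univ := by
    simp only [atomicMeasure, Measure.sum_apply _ MeasurableSet.univ, Measure.smul_apply,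
      measure_univ, smul_eq_mul, mul_one]
    rw [← ENNReal.ofReal_tsum_of_nonneg hw h.summable, h.tsum_eq, ENNReal.ofReal_one]

variable [Countable ι]

theorem integral_atomicMeasure [MeasurableSingletonClass X] {E : Type*} [NormedAddCommGroup E]
    [NormedSpace ℝ E] [FiniteDimensional ℝ E] {w : ι → ℝ} (hw : ∀ i, 0 ≤ w i) (x : ι → X)
    (f : X → E) : ∫ y, f y ∂atomicMeasure w x = ∑' i, w i • f (x i) := by
  rw [atomicMeasure, integral_sum_dirac fun _ ↦ ENNReal.ofReal_ne_top]
  simp only [ENNReal.toReal_ofReal (hw _)]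

theorem tendsto_tsum_mul_of_tendsto_charFun {w x : ℕ → ι → ℝ} (hw : ∀ t i, 0 ≤ w t i)
    (hw_sum : ∀ t, HasSum (w t) 1) {μ : Measure ℝ} [IsProbabilityMeasure μ]
    (h : ∀ ξ : ℝ, Tendsto (fun t ↦ ∑' i, (w t i : ℂ) * Complex.exp (ξ * x t i * Complex.I)) atTop
      (𝓝 (charFun μ ξ)))
    {g : ℝ → ℝ} (hg : Continuous g) {M : ℝ} (hM : ∀ y, |g y| ≤ M) :
    Tendsto (fun t ↦ ∑' i, w t i * g (x t i)) atTop (𝓝 (∫ y, g y ∂μ)) := by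
  let ν (t : ℕ) : ProbabilityMeasure ℝ :=
    ⟨atomicMeasure (w t) (x t), isProbabilityMeasure_atomicMeasure (hw t) (hw_sum t) (x t)⟩
  have weak : Tendsto ν atTop (𝓝 ⟨μ, inferInstance⟩) := by
    refine ProbabilityMeasure.tendsto_iff_tendsto_charFun.2 fun ξ ↦ (h ξ).congr fun t ↦ ?_
    simp only [ν, ProbabilityMeasure.coe_mk, charFun_apply_real, integral_atomicMeasure (hw t),
      Complex.real_smul]
  have lim := ProbabilityMeasure.tendsto_iff_forall_integral_tendsto.1 weak
    (BoundedContinuousFunction.ofNormedAddCommGroup g hg M hM)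
  simpa only [ν, ProbabilityMeasure.coe_mk, BoundedContinuousFunction.coe_ofNormedAddCommGroup,
    integral_atomicMeasure (hw _), smul_eq_mul] using lim

end AtomicMeasures

section Walk

variable (a b s : ℝ) (t : ℕ)

theorem psi_zero_zero : psi a b s 0 0 = (1, 0) := rfl

theorem psi_zero_succ (x : ℕ) : psi a b s 0 (x + 1) = 0 := rfl

theorem psi_succ_fst (x : ℕ) :
    (psi a b s (t + 1) x).1 = a * (psi a b s t (x + 1)).1 - b * (psi a b s t (x + 1)).2 := rfl

theorem psi_snd_zero : (psi a b s t 0).2 = 0 := by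
  cases t <;> rfl

theorem psi_succ_snd_one : (psi a b s (t + 1) 1).2 = s * (psi a b s t 0).1 := rfl

theorem psi_succ_snd_add_two (x : ℕ) : (psi a b s (t + 1) (x + 2)).2 =
    b * (psi a b s t (x + 1)).1 + a * (psi a b s t (x + 1)).2 := rfl

variable {t} in
theorem psi_eq_zero_of_odd {x : ℕ} (h : Odd (t + x)) : psi a b s t x = 0 := by
  induction t generalizing x with
  | zero =>
    obtain _ | x := x
    · simp at h
    · rfl
  | succ t ih =>
    have left : psi a b s t (x + 1) = 0 := ih (by grind)
    obtain _ | _ | x := x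
    · simp [Prod.ext_iff, psi_succ_fst, psi_snd_zero, left]
    · simp [Prod.ext_iff, psi_succ_fst, psi_succ_snd_one, left, ih (x := 0) (by grind)]
    · simp [Prod.ext_iff, psi_succ_fst, psi_succ_snd_add_two, left, ih (x := x + 1) (by grind)]

variable {t} in
theorem psi_eq_zero_of_lt {x : ℕ} (h : t < x) : psi a b s t x = 0 := by
  induction t generalizing x with
  | zero =>
    obtain _ | x := x
    · omega
    · rfl
  | succ t ih =>
    obtain _ | _ | x := x
    · omega
    · omega
    · simp [Prod.ext_iff, psi_succ_fst, psi_succ_snd_add_two, ih (x := x + 3) (by omega),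
        ih (x := x + 1) (by omega)]

theorem summable_of_forall_psi {f : ℕ → ℝ} (h : ∀ x, psi a b s t x = 0 → f x = 0) :
    Summable f :=
  summable_of_ne_finset_zero (s := Finset.range (t + 1)) fun x hx ↦
    h x (psi_eq_zero_of_lt a b s (by simpa using hx))

theorem tsum_prob_mul (h : ℕ → ℝ) :
    ∑' x, prob a b s t x * h x =
      ∑' n, (‖(psi a b s t n).1‖ ^ 2 * h n + ‖(psi a b s t (n + 1)).2‖ ^ 2 * h (n + 1)) := by
  have summable_left : Summable fun x ↦ ‖(psi a b s t x).1‖ ^ 2 * h x :=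
    summable_of_forall_psi a b s t fun x hx ↦ by simp [hx]
  have summable_right : Summable fun x ↦ ‖(psi a b s t x).2‖ ^ 2 * h x :=
    summable_of_forall_psi a b s t fun x hx ↦ by simp [hx]
  simp only [prob, add_mul]
  rw [summable_left.tsum_add summable_right, summable_right.tsum_eq_zero_add,
    summable_left.tsum_add ((summable_nat_add_iff 1).2 summable_right)]
  simp [psi_snd_zero]

variable {a b s}

theorem norm_sq_coin (hab : a ^ 2 + b ^ 2 = 1) (z w : ℂ) :
    ‖a * z - b * w‖ ^ 2 + ‖b * z + a * w‖ ^ 2 = ‖z‖ ^ 2 + ‖w‖ ^ 2 := by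
  simp only [← Complex.normSq_eq_norm_sq, Complex.normSq_apply, Complex.add_re, Complex.add_im,
    Complex.sub_re, Complex.sub_im, Complex.re_ofReal_mul, Complex.im_ofReal_mul]
  linear_combination (z.re ^ 2 + z.im ^ 2 + w.re ^ 2 + w.im ^ 2) * hab

theorem tsum_prob_succ (hab : a ^ 2 + b ^ 2 = 1) (hs : s ^ 2 = 1) :
    ∑' x, prob a b s (t + 1) x = ∑' x, prob a b s t x := by
  have summable_left : Summable fun n ↦ ‖(psi a b s (t + 1) n).1‖ ^ 2 :=
    summable_of_forall_psi a b s (t + 1) fun x hx ↦ by simp [hx]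
  have summable_right : Summable fun n ↦ ‖(psi a b s (t + 1) (n + 1)).2‖ ^ 2 :=
    (summable_nat_add_iff 1).2 <|
      summable_of_forall_psi a b s (t + 1) (f := fun n ↦ ‖(psi a b s (t + 1) n).2‖ ^ 2)
        fun x hx ↦ by simp [hx]
  have summable_prob : Summable (prob a b s t) :=
    summable_of_forall_psi a b s t fun x hx ↦ by simp [prob, hx]
  have coin (x : ℕ) : prob a b s t (x + 1) =
      ‖(psi a b s (t + 1) x).1‖ ^ 2 + ‖(psi a b s (t + 1) (x + 2)).2‖ ^ 2 := by
    rw [psi_succ_fst, psi_succ_snd_add_two, norm_sq_coin hab, prob]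
  have wall : prob a b s t 0 = ‖(psi a b s (t + 1) 1).2‖ ^ 2 := by
    simp [prob, psi_snd_zero, psi_succ_snd_one, mul_pow, hs]
  have split := tsum_prob_mul a b s (t + 1) 1
  simp only [Pi.one_apply, mul_one] at split
  rw [split, summable_left.tsum_add summable_right, summable_right.tsum_eq_zero_add,
    summable_prob.tsum_eq_zero_add, wall, tsum_congr coin,
    summable_left.tsum_add ((summable_nat_add_iff 1).2 summable_right)]
  ring

theorem hasSum_prob (hab : a ^ 2 + b ^ 2 = 1) (hs : s ^ 2 = 1) : HasSum (prob a b s t) 1 := by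
  have total : ∑' x, prob a b s t x = 1 := by
    induction t with
    | zero =>
      rw [tsum_eq_single 0 fun x hx ↦ ?_]
      · simp [prob, psi_zero_zero]
      · obtain ⟨x, rfl⟩ := Nat.exists_eq_succ_of_ne_zero hx
        simp [prob, psi_zero_succ]
    | succ t ih => rw [tsum_prob_succ t hab hs, ih]
  have summable : Summable (prob a b s t) :=
    summable_of_forall_psi a b s t fun x hx ↦ by simp [prob, hx]
  exact total ▸ summable.hasSum

end Walk

section Folding

variable (a b s : ℝ) (t n : ℕ)

/-- The sum of the amplitudes `Ψ_t^L(n)` and `Ψ_t^R(n + 1)`, of which at most one is nonzero by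
parity. Unlike the two components, it satisfies a scalar recurrence, of second order in time. -/
def foldedAmplitude : ℂ := (psi a b s t n).1 + (psi a b s t (n + 1)).2

theorem norm_sq_foldedAmplitude : ‖foldedAmplitude a b s t n‖ ^ 2 =
    ‖(psi a b s t n).1‖ ^ 2 + ‖(psi a b s t (n + 1)).2‖ ^ 2 := by
  obtain even | odd := Nat.even_or_odd (t + n)
  · simp [foldedAmplitude, psi_eq_zero_of_odd a b s (t := t) (x := n + 1) (by grind)]
  · simp [foldedAmplitude, psi_eq_zero_of_odd a b s odd]

theorem foldedAmplitude_zero : foldedAmplitude a b s 0 n = if n = 0 then 1 else 0 := by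
  cases n <;> simp [foldedAmplitude, psi_zero_zero, psi_zero_succ]

theorem foldedAmplitude_one : foldedAmplitude a b s 1 n = if n = 0 then (s : ℂ) else 0 := by
  rw [foldedAmplitude, psi_succ_fst, psi_zero_succ]
  obtain _ | n := n
  · simp [psi_succ_snd_one, psi_zero_zero]
  · simp [psi_succ_snd_add_two, psi_zero_succ]

variable {a b s}

theorem foldedAmplitude_add_two_succ (hab : a ^ 2 + b ^ 2 = 1) :
    foldedAmplitude a b s (t + 2) (n + 1) + foldedAmplitude a b s t (n + 1) =
      a * (foldedAmplitude a b s (t + 1) (n + 2) + foldedAmplitude a b s (t + 1) n) := by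
  have unitary : (a : ℂ) ^ 2 + (b : ℂ) ^ 2 = 1 := mod_cast hab
  simp only [foldedAmplitude, psi_succ_fst, psi_succ_snd_add_two]
  linear_combination (-(psi a b s t (n + 1)).1 - (psi a b s t (n + 2)).2) * unitary

theorem foldedAmplitude_add_two_zero (hab : a ^ 2 + b ^ 2 = 1) (hs : s ^ 2 = 1) :
    foldedAmplitude a b s (t + 2) 0 + foldedAmplitude a b s t 0 =
      a * foldedAmplitude a b s (t + 1) 1 + (s - b) * foldedAmplitude a b s (t + 1) 0 := by
  have unitary : (a : ℂ) ^ 2 + (b : ℂ) ^ 2 = 1 := mod_cast hab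
  have sign : (s : ℂ) ^ 2 = 1 := mod_cast hs
  simp only [foldedAmplitude, psi_succ_fst, psi_succ_snd_one, psi_succ_snd_add_two, zero_add]
  linear_combination (-(psi a b s t 1).2) * unitary - (psi a b s t 0).1 * sign

/-- Extending the recurrence to `ℤ`, the wall becomes the condition `F t (-1) = c * F t 0`. -/
theorem foldedAmplitude_eq_of_recurrence (hab : a ^ 2 + b ^ 2 = 1) (hs : s ^ 2 = 1) {c : ℝ}
    (hc : a * c = s - b) {F : ℕ → ℤ → ℂ}
    (zero : ∀ n : ℕ, F 0 n = if n = 0 then 1 else 0)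
    (one : ∀ n : ℕ, F 1 n = if n = 0 then (s : ℂ) else 0)
    (add_two : ∀ t n, F (t + 2) n + F t n = a * (F (t + 1) (n + 1) + F (t + 1) (n - 1)))
    (wall : ∀ t, F t (-1) = c * F t 0) :
    foldedAmplitude a b s t n = F t n := by
  have hc' : (a : ℂ) * c = s - b := mod_cast hc
  induction t using Nat.twoStepInduction generalizing n with
  | zero => rw [zero, foldedAmplitude_zero]
  | one => rw [one, foldedAmplitude_one]
  | more t ih ih_succ =>
    obtain _ | n := n
    · have recurrence := foldedAmplitude_add_two_zero t hab hs
      have recurrence' := add_two t 0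
      rw [zero_sub, zero_add, wall] at recurrence'
      rw [ih, ih_succ, ih_succ] at recurrence
      push_cast at recurrence ⊢
      linear_combination recurrence - recurrence' - F (t + 1) 0 * hc'
    · have recurrence := foldedAmplitude_add_two_succ (s := s) t n hab
      have recurrence' := add_two t (n + 1)
      rw [add_sub_cancel_right, add_assoc, one_add_one_eq_two] at recurrence'
      rw [ih, ih_succ, ih_succ] at recurrence
      push_cast at recurrence ⊢
      linear_combination recurrence - recurrence'

end Folding

section Comparison

theorem eventually_forall_abs_sub_div_lt {g : ℝ → ℝ} (hg : ContinuousOn g (Set.Icc 0 1)) {ε : ℝ}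
    (hε : 0 < ε) :
    ∀ᶠ t : ℕ in atTop, ∀ n : ℕ, n + 1 ≤ t → |g (((n + 1 : ℕ) : ℝ) / t) - g ((n : ℝ) / t)| < ε := by
  obtain ⟨δ, hδ, close⟩ := Metric.uniformContinuousOn_iff.1
    (isCompact_Icc.uniformContinuousOn_of_continuous hg) ε hε
  have mem_Icc {t n : ℕ} (h : n ≤ t) : (n : ℝ) / t ∈ Set.Icc (0 : ℝ) 1 :=
    ⟨by positivity, div_le_one_of_le₀ (mod_cast h) t.cast_nonneg⟩
  filter_upwards [tendsto_one_div_atTop_nhds_zero_nat.eventually_lt_const hδ] with t ht n hn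
  refine close _ (mem_Icc hn) _ (mem_Icc (n.le_succ.trans hn)) ?_
  rwa [Real.dist_eq, Nat.cast_succ, ← sub_div, add_sub_cancel_left, abs_of_nonneg (by positivity)]

variable {a b s : ℝ}

theorem tsum_prob_mul_sub_tsum_norm_sq_foldedAmplitude_mul (t : ℕ) (h : ℕ → ℝ) :
    ∑' x, prob a b s t x * h x - ∑' n, ‖foldedAmplitude a b s t n‖ ^ 2 * h n =
      ∑' n, ‖(psi a b s t (n + 1)).2‖ ^ 2 * (h (n + 1) - h n) := by
  have summable_left : Summable fun n ↦ ‖(psi a b s t n).1‖ ^ 2 * h n :=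
    summable_of_forall_psi a b s t fun x hx ↦ by simp [hx]
  have summable_right (k : ℕ → ℝ) : Summable fun n ↦ ‖(psi a b s t (n + 1)).2‖ ^ 2 * k (n + 1) :=
    (summable_nat_add_iff 1).2 <|
      summable_of_forall_psi a b s t (f := fun n ↦ ‖(psi a b s t n).2‖ ^ 2 * k n)
        fun x hx ↦ by simp [hx]
  have summable_right' := summable_right fun n ↦ h (n - 1)
  simp only [add_tsub_cancel_right] at summable_right'
  rw [tsum_prob_mul]
  simp only [norm_sq_foldedAmplitude, add_mul, mul_sub]
  rw [summable_left.tsum_add (summable_right h), summable_left.tsum_add summable_right',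
    (summable_right h).tsum_sub summable_right']
  ring

theorem abs_tsum_prob_mul_sub_tsum_norm_sq_foldedAmplitude_mul_le (hab : a ^ 2 + b ^ 2 = 1)
    (hs : s ^ 2 = 1) (t : ℕ) {h : ℕ → ℝ} {ε : ℝ} (hε : 0 ≤ ε)
    (hεh : ∀ n, n + 1 ≤ t → |h (n + 1) - h n| ≤ ε) :
    |∑' x, prob a b s t x * h x - ∑' n, ‖foldedAmplitude a b s t n‖ ^ 2 * h n| ≤ ε := by
  rw [tsum_prob_mul_sub_tsum_norm_sq_foldedAmplitude_mul]
  have norm_le (n : ℕ) : ‖‖(psi a b s t (n + 1)).2‖ ^ 2 * (h (n + 1) - h n)‖ ≤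
      prob a b s t (n + 1) * ε := by
    obtain le | lt := le_or_gt (n + 1) t
    · rw [norm_mul, norm_pow, norm_norm]
      exact mul_le_mul (le_add_of_nonneg_left (by positivity)) (hεh n le) (norm_nonneg _)
        (by unfold prob; positivity)
    · simp [prob, psi_eq_zero_of_lt a b s lt]
  have tail := (hasSum_nat_add_iff' 1).2 (hasSum_prob t hab hs)
  refine (tsum_of_norm_bounded (tail.mul_right ε) norm_le).trans (mul_le_of_le_one_left hε ?_)
  simp only [Finset.sum_range_one, prob]
  linarith [sq_nonneg ‖(psi a b s t 0).1‖, sq_nonneg ‖(psi a b s t 0).2‖]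

theorem tendsto_tsum_prob_mul_sub_tsum_norm_sq_foldedAmplitude_mul (hab : a ^ 2 + b ^ 2 = 1)
    (hs : s ^ 2 = 1) {g : ℝ → ℝ} (hg : ContinuousOn g (Set.Icc 0 1)) :
    Tendsto (fun t : ℕ ↦ ∑' x : ℕ, prob a b s t x * g ((x : ℝ) / t) -
      ∑' n : ℕ, ‖foldedAmplitude a b s t n‖ ^ 2 * g ((n : ℝ) / t)) atTop (𝓝 0) := by
  rw [Metric.tendsto_nhds]
  intro ε hε
  filter_upwards [eventually_forall_abs_sub_div_lt hg (half_pos hε)] with t ht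
  rw [dist_zero_right, Real.norm_eq_abs]
  exact (abs_tsum_prob_mul_sub_tsum_norm_sq_foldedAmplitude_mul_le hab hs t
    (h := fun n ↦ g ((n : ℝ) / t)) (half_pos hε).le fun n hn ↦ (ht n hn).le).trans_lt
      (half_lt_self hε)

end Comparison

/-- The circle `ℝ / 2πℤ` of momenta, on which the walk is diagonalized. -/
abbrev Momentum : Type := AddCircle (2 * Real.pi)

instance fact_two_pi_pos : Fact (0 < 2 * Real.pi) := ⟨Real.two_pi_pos⟩

section Dispersion

open Real.Angle (cos sin)

/-- The dispersion relation `ω(θ) ∈ [0, π]`, given by `cos ω(θ) = a cos θ`. -/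
def dispersion (a : ℝ) (θ : Momentum) : ℝ := Real.arccos (a * cos θ)

/-- The group velocity `ω'(θ)`. -/
def groupVelocity (a : ℝ) (θ : Momentum) : ℝ := a * sin θ / √(1 - (a * cos θ) ^ 2)

variable {a : ℝ}

theorem dispersion_neg (a : ℝ) (θ : Momentum) : dispersion a (-θ) = dispersion a θ :=
  congrArg (fun y ↦ Real.arccos (a * y)) (Real.Angle.cos_neg θ)

theorem dispersion_add_pi (a : ℝ) (θ : Momentum) :
    dispersion a (θ + Real.pi) = Real.pi - dispersion a θ := by
  rw [dispersion, dispersion, ← Real.arccos_neg, ← mul_neg]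
  exact congrArg (fun y ↦ Real.arccos (a * y)) (Real.Angle.cos_add_pi θ)

theorem groupVelocity_neg (a : ℝ) (θ : Momentum) : groupVelocity a (-θ) = -groupVelocity a θ := by
  have cos_neg : cos (-θ : Momentum) = cos θ := Real.Angle.cos_neg θ
  have sin_neg : sin (-θ : Momentum) = -sin θ := Real.Angle.sin_neg θ
  rw [groupVelocity, groupVelocity, cos_neg, sin_neg, mul_neg, neg_div]

theorem groupVelocity_zero (a : ℝ) : groupVelocity a (0 : ℝ) = 0 := by
  change a * Real.sin 0 / _ = 0
  rw [Real.sin_zero, mul_zero, zero_div]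

theorem groupVelocity_pi_div_two (a : ℝ) : groupVelocity a (Real.pi / 2 : ℝ) = a := by
  change a * Real.sin (Real.pi / 2) / √(1 - (a * Real.cos (Real.pi / 2)) ^ 2) = a
  simp

theorem groupVelocity_add_pi (a : ℝ) (θ : Momentum) :
    groupVelocity a (θ + Real.pi) = -groupVelocity a θ := by
  have cos_shift : cos (θ + Real.pi : Momentum) = -cos θ := Real.Angle.cos_add_pi θ
  have sin_shift : sin (θ + Real.pi : Momentum) = -sin θ := Real.Angle.sin_add_pi θ
  rw [groupVelocity, groupVelocity, cos_shift, sin_shift, mul_neg, mul_neg, neg_sq, neg_div]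

theorem abs_mul_cos_lt_one (ha : |a| < 1) (θ : Momentum) : |a * cos θ| < 1 := by
  have abs_cos_le_one : |cos θ| ≤ 1 :=
    (sq_le_one_iff_abs_le_one _).1 (by linarith [Real.Angle.cos_sq_add_sin_sq θ, sq_nonneg (sin θ)])
  rw [abs_mul]
  exact (mul_le_of_le_one_right (abs_nonneg a) abs_cos_le_one).trans_lt ha

theorem one_sub_sq_mul_cos_pos (ha : |a| < 1) (θ : Momentum) : 0 < 1 - (a * cos θ) ^ 2 :=
  sub_pos.2 <| (sq_lt_one_iff_abs_lt_one _).2 <| abs_mul_cos_lt_one ha θ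

theorem cos_dispersion (ha : |a| < 1) (θ : Momentum) : Real.cos (dispersion a θ) = a * cos θ :=
  have lt := abs_lt.1 (abs_mul_cos_lt_one ha θ)
  Real.cos_arccos lt.1.le lt.2.le

theorem cos_half_dispersion_pos (ha : |a| < 1) (θ : Momentum) :
    0 < Real.cos (dispersion a θ / 2) := by
  have nonneg : 0 ≤ dispersion a θ := Real.arccos_nonneg _
  have lt_pi : dispersion a θ < Real.pi :=
    (Real.arccos_le_pi _).lt_of_ne fun h ↦
      (abs_lt.1 (abs_mul_cos_lt_one ha θ)).1.not_ge (Real.arccos_eq_pi.1 h)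
  exact Real.cos_pos_of_mem_Ioo ⟨by linarith [Real.pi_pos], by linarith⟩

theorem continuous_dispersion (a : ℝ) : Continuous (dispersion a) :=
  Real.continuous_arccos.comp (Real.Angle.continuous_cos.const_mul a)

theorem continuous_groupVelocity (ha : |a| < 1) : Continuous (groupVelocity a) := by
  have cos_cont : Continuous fun θ : Momentum ↦ cos θ := Real.Angle.continuous_cos
  have sin_cont : Continuous fun θ : Momentum ↦ sin θ := Real.Angle.continuous_sin
  exact (sin_cont.const_mul a).div (by fun_prop) fun θ ↦
    (Real.sqrt_pos.2 (one_sub_sq_mul_cos_pos ha θ)).ne'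

theorem hasDerivAt_dispersion (ha : |a| < 1) (θ : Momentum) :
    HasDerivAt (fun s : ℝ ↦ dispersion a (θ + s)) (groupVelocity a θ) 0 := by
  induction θ using QuotientAddGroup.induction_on with | H x =>
  have lt := abs_lt.1 (abs_mul_cos_lt_one ha (x : Momentum))
  have inner : HasDerivAt (fun s : ℝ ↦ a * Real.cos (x + s)) (a * -Real.sin x) 0 := by
    simpa using ((Real.hasDerivAt_cos (x + 0)).comp_const_add x 0).const_mul a
  have outer : HasDerivAt Real.arccos (-(1 / √(1 - (a * Real.cos x) ^ 2)))
      (a * Real.cos (x + 0)) := by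
    rw [add_zero]
    exact Real.hasDerivAt_arccos lt.1.ne' lt.2.ne
  refine (outer.comp 0 inner).congr_deriv ?_
  change _ = a * Real.sin x / √(1 - (a * Real.cos x) ^ 2)
  ring

end Dispersion

section Modes

open Real.Angle (cos sin)

variable {a c : ℝ}

theorem fourier_one_eq_cos_add_sin (θ : Momentum) :
    (fourier 1 θ : ℂ) = cos θ + sin θ * Complex.I := by
  induction θ using QuotientAddGroup.induction_on with | H x =>
  have angle : 2 * Real.pi * Complex.I * (1 : ℤ) * x / (2 * Real.pi : ℝ) = x * Complex.I := by
    have := Complex.ofReal_ne_zero.2 Real.pi_ne_zero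
    push_cast
    field_simp
  refine (fourier_coe_apply (T := 2 * Real.pi)).trans ?_
  rw [angle, Complex.exp_mul_I, ← Complex.ofReal_cos, ← Complex.ofReal_sin]
  rfl

theorem fourier_neg_one_eq_cos_sub_sin (θ : Momentum) :
    (fourier (-1) θ : ℂ) = cos θ - sin θ * Complex.I := by
  rw [fourier_neg, fourier_one_eq_cos_add_sin]
  simp [sub_eq_add_neg]

theorem fourier_neg_two (θ : Momentum) : (fourier (-2) θ : ℂ) = fourier (-1) θ ^ 2 := by
  rw [sq, ← fourier_add]
  norm_num

/-- The solution `cos((t - 1/2) ω(θ)) / cos(ω(θ) / 2)` of the oscillator `y'' + ω(θ)² y = 0` in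
discrete time `t`, with value `1` at the times `0` and `1`. -/
def bulkMode (a : ℝ) (t : ℕ) (θ : Momentum) : ℝ :=
  Real.cos ((t - 1 / 2) * dispersion a θ) / Real.cos (dispersion a θ / 2)

/-- The factor `(1 - e^{-2iθ}) / (1 - c e^{-iθ})`, whose Fourier coefficients implement the
wall condition `F (-1) = c * F 0`. -/
def wallFactor (c : ℝ) (θ : Momentum) : ℂ :=
  (1 - fourier (-2) θ) / (1 - c * fourier (-1) θ)

/-- The momentum-space amplitude at time `t` of the folded walk extended to `ℤ`. -/
def halfLineMode (a c : ℝ) (t : ℕ) (θ : Momentum) : ℂ := wallFactor c θ * bulkMode a t θ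

theorem bulkMode_neg (a : ℝ) (t : ℕ) (θ : Momentum) : bulkMode a t (-θ) = bulkMode a t θ := by
  rw [bulkMode, bulkMode, dispersion_neg]

theorem bulkMode_zero (ha : |a| < 1) (θ : Momentum) : bulkMode a 0 θ = 1 := by
  rw [bulkMode, Nat.cast_zero, zero_sub, neg_mul, Real.cos_neg, one_div_mul_eq_div]
  exact div_self (cos_half_dispersion_pos ha θ).ne'

theorem bulkMode_one (ha : |a| < 1) (θ : Momentum) : bulkMode a 1 θ = 1 := by
  rw [← bulkMode_zero ha θ, bulkMode, bulkMode, ← Real.cos_neg]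
  congr 2
  push_cast
  ring

theorem bulkMode_add_two (ha : |a| < 1) (t : ℕ) (θ : Momentum) :
    bulkMode a (t + 2) θ + bulkMode a t θ = 2 * (a * cos θ) * bulkMode a (t + 1) θ := by
  rw [bulkMode, bulkMode, ← add_div, Real.cos_add_cos, ← cos_dispersion ha, bulkMode]
  push_cast
  ring_nf

theorem continuous_bulkMode (ha : |a| < 1) (t : ℕ) : Continuous (bulkMode a t) := by
  have := continuous_dispersion a
  exact .div (by fun_prop) (by fun_prop) fun θ ↦ (cos_half_dispersion_pos ha θ).ne'

theorem one_sub_mul_fourier_ne_zero (hc : |c| < 1) (n : ℤ) (θ : Momentum) :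
    (1 - c * fourier n θ : ℂ) ≠ 0 := by
  intro h
  have norm_eq := congrArg norm (sub_eq_zero.1 h)
  rw [norm_one, norm_mul, fourier_apply, Circle.norm_coe, mul_one,
    Complex.norm_real, Real.norm_eq_abs] at norm_eq
  exact hc.ne norm_eq.symm

theorem continuous_wallFactor (hc : |c| < 1) : Continuous (wallFactor c) :=
  .div (by fun_prop) (by fun_prop) (one_sub_mul_fourier_ne_zero hc (-1))

theorem continuous_halfLineMode (ha : |a| < 1) (hc : |c| < 1) (t : ℕ) :
    Continuous (halfLineMode a c t) :=
  (continuous_wallFactor hc).mul (Complex.continuous_ofReal.comp (continuous_bulkMode ha t))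

theorem halfLineMode_one (ha : |a| < 1) : halfLineMode a c 1 = halfLineMode a c 0 := by
  ext θ
  rw [halfLineMode, halfLineMode, bulkMode_one ha, bulkMode_zero ha]

theorem halfLineMode_add_two (ha : |a| < 1) (t : ℕ) (θ : Momentum) :
    halfLineMode a c (t + 2) θ + halfLineMode a c t θ =
      a * (fourier (-1) θ * halfLineMode a c (t + 1) θ +
        fourier 1 θ * halfLineMode a c (t + 1) θ) := by
  have recurrence := congrArg ((↑) : ℝ → ℂ) (bulkMode_add_two ha t θ)
  push_cast at recurrence
  rw [fourier_one_eq_cos_add_sin, fourier_neg_one_eq_cos_sub_sin]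
  simp only [halfLineMode]
  linear_combination wallFactor c θ * recurrence

theorem halfLineMode_sub_fourier_mul (hc : |c| < 1) (t : ℕ) (θ : Momentum) :
    halfLineMode a c t θ - c * (fourier (-1) θ * halfLineMode a c t θ) =
      bulkMode a t θ - fourier (-2) θ * bulkMode a t θ := by
  have cancel : wallFactor c θ * (1 - c * fourier (-1) θ) = 1 - fourier (-2) θ :=
    div_mul_cancel₀ _ (one_sub_mul_fourier_ne_zero hc (-1) θ)
  rw [halfLineMode]
  linear_combination bulkMode a t θ * cancel

theorem norm_sq_wallFactor (hac : a * (1 + c ^ 2) = 2 * c) (θ : Momentum) :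
    ‖wallFactor c θ‖ ^ 2 = 4 * sin θ ^ 2 / ((1 + c ^ 2) * (1 - a * cos θ)) := by
  have pythagoras : cos θ ^ 2 + sin θ ^ 2 = 1 := Real.Angle.cos_sq_add_sin_sq θ
  rw [wallFactor, norm_div, div_pow, fourier_neg_two, fourier_neg_one_eq_cos_sub_sin,
    ← Complex.normSq_eq_norm_sq, ← Complex.normSq_eq_norm_sq]
  congr 1
  · simp only [Complex.normSq_apply, sq, Complex.sub_re, Complex.sub_im, Complex.mul_re,
      Complex.mul_im, Complex.ofReal_re, Complex.ofReal_im, Complex.I_re, Complex.I_im,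
      Complex.one_re, Complex.one_im]
    linear_combination (cos θ ^ 2 + sin θ ^ 2 - 1) * pythagoras
  · simp only [Complex.normSq_apply, Complex.sub_re, Complex.sub_im, Complex.mul_re,
      Complex.mul_im, Complex.ofReal_re, Complex.ofReal_im, Complex.I_re, Complex.I_im,
      Complex.one_re, Complex.one_im]
    linear_combination c ^ 2 * pythagoras + cos θ * hac

/-- The limiting distribution of the momentum of the walk, as a density on the circle. -/
def momentumDensity (a c : ℝ) (θ : Momentum) : ℝ :=
  2 * sin θ ^ 2 / ((1 + c ^ 2) * (1 - (a * cos θ) ^ 2))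

theorem momentumDensity_nonneg (ha : |a| < 1) (c : ℝ) (θ : Momentum) :
    0 ≤ momentumDensity a c θ := by
  have := one_sub_sq_mul_cos_pos ha θ
  unfold momentumDensity
  positivity

theorem momentumDensity_add_pi (a c : ℝ) (θ : Momentum) :
    momentumDensity a c (θ + Real.pi) = momentumDensity a c θ := by
  have cos_shift : cos (θ + Real.pi : Momentum) = -cos θ := Real.Angle.cos_add_pi θ
  have sin_shift : sin (θ + Real.pi : Momentum) = -sin θ := Real.Angle.sin_add_pi θ
  rw [momentumDensity, momentumDensity, cos_shift, sin_shift, mul_neg, neg_sq, neg_sq]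

theorem continuous_momentumDensity (ha : |a| < 1) (c : ℝ) : Continuous (momentumDensity a c) := by
  have cos_cont : Continuous fun θ : Momentum ↦ cos θ := Real.Angle.continuous_cos
  have sin_cont : Continuous fun θ : Momentum ↦ sin θ := Real.Angle.continuous_sin
  exact .div (by fun_prop) (by fun_prop) fun θ ↦
    (mul_pos (by positivity) (one_sub_sq_mul_cos_pos ha θ)).ne'

/-- The factor of `halfLineMode` that does not depend on time. -/
def modeAmplitude (a c : ℝ) (θ : Momentum) : ℂ :=
  wallFactor c θ / Real.cos (dispersion a θ / 2)

theorem halfLineMode_eq_modeAmplitude_mul_cos (a c : ℝ) (t : ℕ) (θ : Momentum) :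
    halfLineMode a c t θ = modeAmplitude a c θ * Real.cos ((t - 1 / 2) * dispersion a θ) := by
  rw [halfLineMode, modeAmplitude, bulkMode, Complex.ofReal_div, div_mul_eq_mul_div, mul_div_assoc]

theorem continuous_modeAmplitude (ha : |a| < 1) (hc : |c| < 1) :
    Continuous (modeAmplitude a c) := by
  have := continuous_dispersion a
  exact (continuous_wallFactor hc).div (by fun_prop) fun θ ↦
    Complex.ofReal_ne_zero.2 (cos_half_dispersion_pos ha θ).ne'

theorem norm_sq_modeAmplitude (ha : |a| < 1) (hac : a * (1 + c ^ 2) = 2 * c) (θ : Momentum) :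
    ‖modeAmplitude a c θ‖ ^ 2 = 4 * momentumDensity a c θ := by
  have lt := abs_lt.1 (abs_mul_cos_lt_one ha θ)
  have half_angle : Real.cos (dispersion a θ / 2) ^ 2 = (1 + a * cos θ) / 2 := by
    rw [Real.cos_sq, mul_div_cancel₀ _ two_ne_zero, cos_dispersion ha]
    ring
  rw [modeAmplitude, norm_div, div_pow, norm_sq_wallFactor hac, Complex.norm_real,
    Real.norm_eq_abs, sq_abs, half_angle, momentumDensity, ← one_pow 2, sq_sub_sq]
  have : 1 - a * cos θ ≠ 0 := by linarith
  have : 1 + a * cos θ ≠ 0 := by linarith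
  field_simp

end Modes

section ExtendedAmplitude

variable {a b c : ℝ}

/-- The folded walk extended to `ℤ` by the second-order recurrence and the wall condition. -/
def extendedAmplitude (a c : ℝ) (t : ℕ) (n : ℤ) : ℂ := fourierCoeff (halfLineMode a c t) n

theorem extendedAmplitude_one (ha : |a| < 1) :
    extendedAmplitude a c 1 = extendedAmplitude a c 0 := by
  ext n
  rw [extendedAmplitude, extendedAmplitude, halfLineMode_one ha]

theorem extendedAmplitude_add_two (ha : |a| < 1) (hc : |c| < 1) (t : ℕ) (n : ℤ) :
    extendedAmplitude a c (t + 2) n + extendedAmplitude a c t n =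
      a * (extendedAmplitude a c (t + 1) (n + 1) + extendedAmplitude a c (t + 1) (n - 1)) := by
  have cont (s : ℕ) : Continuous (halfLineMode a c s) := continuous_halfLineMode ha hc s
  have shift_left := fourierCoeff_fourier_mul (halfLineMode a c (t + 1)) (-1) n
  have shift_right := fourierCoeff_fourier_mul (halfLineMode a c (t + 1)) 1 n
  rw [sub_neg_eq_add] at shift_left
  simp only [extendedAmplitude]
  rw [← fourierCoeff_add_of_continuous (cont _) (cont _), ← shift_left, ← shift_right,
    ← fourierCoeff_add_of_continuous (by fun_prop) (by fun_prop), ← fourierCoeff.const_mul]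
  exact congrArg (fourierCoeff · n) (funext (halfLineMode_add_two ha t))

theorem extendedAmplitude_sub_mul (ha : |a| < 1) (hc : |c| < 1) (t : ℕ) (n : ℤ) :
    extendedAmplitude a c t n - c * extendedAmplitude a c t (n + 1) =
      fourierCoeff (fun θ ↦ (bulkMode a t θ : ℂ)) n -
        fourierCoeff (fun θ ↦ (bulkMode a t θ : ℂ)) (n + 2) := by
  have cont : Continuous (halfLineMode a c t) := continuous_halfLineMode ha hc t
  have cont_bulk := continuous_bulkMode ha t
  have shift_one := fourierCoeff_fourier_mul (halfLineMode a c t) (-1) n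
  have shift_two := fourierCoeff_fourier_mul (fun θ ↦ (bulkMode a t θ : ℂ)) (-2) n
  rw [sub_neg_eq_add] at shift_one shift_two
  rw [extendedAmplitude, extendedAmplitude, ← shift_one, ← shift_two, ← fourierCoeff.const_mul,
    ← fourierCoeff_sub_of_continuous cont (by fun_prop),
    ← fourierCoeff_sub_of_continuous (by fun_prop) (by fun_prop)]
  exact congrArg (fourierCoeff · n) (funext (halfLineMode_sub_fourier_mul hc t))

theorem extendedAmplitude_neg_one (ha : |a| < 1) (hc : |c| < 1) (t : ℕ) :
    extendedAmplitude a c t (-1) = c * extendedAmplitude a c t 0 := by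
  have even : Function.Even fun θ ↦ (bulkMode a t θ : ℂ) := fun θ ↦
    congrArg _ (bulkMode_neg a t θ)
  have recurrence := extendedAmplitude_sub_mul ha hc t (-1)
  rwa [fourierCoeff_neg_of_even even, neg_add_cancel, show (-1 + 2 : ℤ) = 1 from rfl, sub_self,
    sub_eq_zero] at recurrence

theorem extendedAmplitude_zero_sub_mul (ha : |a| < 1) (hc : |c| < 1) (n : ℤ) :
    extendedAmplitude a c 0 n - c * extendedAmplitude a c 0 (n + 1) =
      (if n = 0 then 1 else 0) - if n = -2 then 1 else 0 := by
  have coeff_one (m : ℤ) :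
      fourierCoeff (fun θ ↦ (bulkMode a 0 θ : ℂ)) m = if m = 0 then 1 else 0 := by
    have : (fun θ ↦ (bulkMode a 0 θ : ℂ)) = fourier 0 := by
      ext θ
      rw [bulkMode_zero ha, Complex.ofReal_one, fourier_zero]
    rw [this, fourierCoeff_fourier, Pi.single_apply]
  rw [extendedAmplitude_sub_mul ha hc, coeff_one, coeff_one]
  simp only [← eq_neg_iff_add_eq_zero]

theorem eq_zero_of_bounded_of_eq_mul_succ {𝕜 : Type*} [NormedField 𝕜] {q : 𝕜} (hq : ‖q‖ < 1)
    {x : ℕ → 𝕜} {C : ℝ} (hC : ∀ n, ‖x n‖ ≤ C) (hx : ∀ n, x n = q * x (n + 1)) : x 0 = 0 := by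
  have iterate (n : ℕ) : x 0 = q ^ n * x n := by
    induction n with
    | zero => rw [pow_zero, one_mul]
    | succ n ih => rw [ih, hx n, pow_succ, mul_assoc]
  have bound (n : ℕ) : ‖x 0‖ ≤ ‖q‖ ^ n * C := by
    rw [iterate n, norm_mul, norm_pow]
    exact mul_le_mul_of_nonneg_left (hC n) (by positivity)
  have lim := (tendsto_pow_atTop_nhds_zero_of_lt_one (norm_nonneg q) hq).mul_const C
  rw [zero_mul] at lim
  exact norm_le_zero_iff.1 (ge_of_tendsto' lim bound)

theorem extendedAmplitude_zero_of_pos (ha : |a| < 1) (hc : |c| < 1) {n : ℤ} (hn : 0 < n) :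
    extendedAmplitude a c 0 n = 0 := by
  have norm_lt : ‖(c : ℂ)‖ < 1 := by rwa [Complex.norm_real]
  have eq_mul_succ (k : ℕ) : extendedAmplitude a c 0 (n + k) =
      c * extendedAmplitude a c 0 (n + (k + 1 : ℕ)) := by
    have recurrence := extendedAmplitude_zero_sub_mul ha hc (n + k)
    rw [if_neg (by lia), if_neg (by lia), sub_self, sub_eq_zero] at recurrence
    rw [recurrence, Nat.cast_succ, add_assoc]
  have bounded (k : ℕ) := norm_fourierCoeff_le (halfLineMode a c 0) (n + k)
  have start := eq_zero_of_bounded_of_eq_mul_succ norm_lt bounded eq_mul_succ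
  rwa [Nat.cast_zero, add_zero] at start

theorem extendedAmplitude_zero_natCast (ha : |a| < 1) (hc : |c| < 1) (n : ℕ) :
    extendedAmplitude a c 0 n = if n = 0 then 1 else 0 := by
  obtain rfl | hn := eq_or_ne n 0
  · have recurrence := extendedAmplitude_zero_sub_mul ha hc 0
    rw [extendedAmplitude_zero_of_pos ha hc (zero_lt_one.trans_eq (zero_add 1).symm)] at recurrence
    simpa using recurrence
  · rw [if_neg hn, extendedAmplitude_zero_of_pos ha hc (by lia)]

theorem extendedAmplitude_zero_neg_add_two (ha : |a| < 1) (hc : |c| < 1) (n : ℕ) :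
    extendedAmplitude a c 0 (-(n + 2)) = c ^ n * (c ^ 2 - 1) := by
  induction n with
  | zero =>
    have recurrence := extendedAmplitude_zero_sub_mul ha hc (-2)
    have origin := extendedAmplitude_zero_natCast ha hc 0
    rw [Nat.cast_zero] at origin
    rw [show (-2 + 1 : ℤ) = -1 from rfl, extendedAmplitude_neg_one ha hc, origin] at recurrence
    norm_num at recurrence ⊢
    linear_combination recurrence
  | succ n ih =>
    have recurrence := extendedAmplitude_zero_sub_mul ha hc (-(n + 1 + 2))
    rw [if_neg (by lia), if_neg (by lia), show -((n : ℤ) + 1 + 2) + 1 = -(n + 2) by ring, ih]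
      at recurrence
    push_cast
    linear_combination recurrence

theorem hasSum_norm_sq_extendedAmplitude_zero (ha : |a| < 1) (hc : |c| < 1) :
    HasSum (fun n : ℤ ↦ ‖extendedAmplitude a c 0 n‖ ^ 2) 2 := by
  have origin : extendedAmplitude a c 0 0 = 1 := extendedAmplitude_zero_natCast ha hc 0
  have sq_lt : c ^ 2 < 1 := (sq_lt_one_iff_abs_lt_one c).2 hc
  have right : HasSum (fun n : ℕ ↦ ‖extendedAmplitude a c 0 n‖ ^ 2) 1 := by
    simp_rw [extendedAmplitude_zero_natCast ha hc, apply_ite norm, ite_pow]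
    simpa using hasSum_ite_eq 0 (1 : ℝ)
  have tail : HasSum (fun n : ℕ ↦ ‖extendedAmplitude a c 0 (-(n + 2))‖ ^ 2) (1 - c ^ 2) := by
    have geometric := (hasSum_geometric_of_lt_one (sq_nonneg c) sq_lt).mul_left ((1 - c ^ 2) ^ 2)
    rw [sq (1 - c ^ 2), mul_assoc, mul_inv_cancel₀ (by linarith), mul_one] at geometric
    refine geometric.congr_fun fun n ↦ ?_
    rw [extendedAmplitude_zero_neg_add_two ha hc]
    norm_cast
    rw [Real.norm_eq_abs, sq_abs]
    ring
  have left : HasSum (fun n : ℕ ↦ ‖extendedAmplitude a c 0 (-(n + 1))‖ ^ 2) 1 := by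
    rw [← hasSum_nat_add_iff' 1]
    simpa [add_assoc, one_add_one_eq_two, extendedAmplitude_neg_one ha hc, origin] using tail
  simpa [one_add_one_eq_two] using HasSum.of_nat_of_neg_add_one
    (f := fun n : ℤ ↦ ‖extendedAmplitude a c 0 n‖ ^ 2) right left

theorem foldedAmplitude_eq_extendedAmplitude (ha : |a| < 1) (hab : a ^ 2 + b ^ 2 = 1)
    (hc : |c| < 1) (hac : a * c = 1 - b) (t n : ℕ) :
    foldedAmplitude a b 1 t n = extendedAmplitude a c t n := by
  refine foldedAmplitude_eq_of_recurrence t n hab (one_pow 2) hac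
    (extendedAmplitude_zero_natCast ha hc) (fun m ↦ ?_) (extendedAmplitude_add_two ha hc)
    (extendedAmplitude_neg_one ha hc)
  rw [extendedAmplitude_one ha, extendedAmplitude_zero_natCast ha hc, Complex.ofReal_one]

end ExtendedAmplitude

section Correlation

open AddCircle ComplexConjugate

variable {a c : ℝ}

/-- The slowly varying part of the product of the amplitudes at the momenta `θ` and `θ + s`. -/
def modeCorrelation (a c : ℝ) (s θ : Momentum) : ℂ :=
  conj (modeAmplitude a c θ) * modeAmplitude a c (θ + s)

theorem modeCorrelation_zero (ha : |a| < 1) (hac : a * (1 + c ^ 2) = 2 * c) (θ : Momentum) :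
    modeCorrelation a c 0 θ = (4 * momentumDensity a c θ : ℝ) := by
  rw [modeCorrelation, add_zero, Complex.conj_mul', ← Complex.ofReal_pow,
    norm_sq_modeAmplitude ha hac]

theorem tendsto_modeCorrelation (ha : |a| < 1) (hc : |c| < 1) (hac : a * (1 + c ^ 2) = 2 * c)
    (θ : Momentum) :
    Tendsto (fun s ↦ modeCorrelation a c s θ) (𝓝 0) (𝓝 (4 * momentumDensity a c θ : ℝ)) := by
  have amplitude_cont := continuous_modeAmplitude ha hc
  have correlation_cont : Continuous fun s ↦ modeCorrelation a c s θ := by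
    unfold modeCorrelation
    fun_prop
  exact correlation_cont.tendsto' 0 _ (modeCorrelation_zero ha hac θ)

theorem conj_halfLineMode_mul_halfLineMode_add (a c : ℝ) (t : ℕ) (s θ : Momentum) :
    conj (halfLineMode a c t θ) * halfLineMode a c t (θ + s) =
      modeCorrelation a c s θ * (Real.cos ((t - 1 / 2) * dispersion a θ) *
        Real.cos ((t - 1 / 2) * dispersion a (θ + s))) := by
  rw [halfLineMode_eq_modeAmplitude_mul_cos, halfLineMode_eq_modeAmplitude_mul_cos,
    modeCorrelation, map_mul, Complex.conj_ofReal]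
  ring

theorem cos_sub_half_mul_two_pi_sub (t : ℕ) (x : ℝ) :
    Real.cos ((t - 1 / 2) * (2 * Real.pi - x)) = -Real.cos ((t - 1 / 2) * x) := by
  have angle : (t - 1 / 2) * (2 * Real.pi - x) =
      -((t - 1 / 2) * x + Real.pi) + t * (2 * Real.pi) := by ring
  rw [angle, Real.cos_add_nat_mul_two_pi, Real.cos_neg, Real.cos_add_pi]

/-- The rapidly oscillating phase `(t - 1/2) (ω(θ) + ω(θ + s))` changes sign under `θ ↦ θ + π`,
which makes its contribution negligible without a stationary phase estimate. -/
theorem conj_halfLineMode_mul_halfLineMode_add_shift_pi (a c : ℝ) (t : ℕ) (s θ : Momentum) :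
    conj (halfLineMode a c t θ) * halfLineMode a c t (θ + s) +
        conj (halfLineMode a c t (θ + Real.pi)) * halfLineMode a c t (θ + Real.pi + s) =
      Real.cos ((t - 1 / 2) * (dispersion a (θ + s) - dispersion a θ)) / 2 *
          (modeCorrelation a c s θ + modeCorrelation a c s (θ + Real.pi)) +
        Real.cos ((t - 1 / 2) * (dispersion a (θ + s) + dispersion a θ)) / 2 *
          (modeCorrelation a c s θ - modeCorrelation a c s (θ + Real.pi)) := by
  have product (x y : ℝ) : Real.cos ((t - 1 / 2) * x) * Real.cos ((t - 1 / 2) * y) =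
      (Real.cos ((t - 1 / 2) * (y - x)) + Real.cos ((t - 1 / 2) * (y + x))) / 2 := by
    rw [mul_sub, mul_add, Real.cos_sub, Real.cos_add]
    ring
  have shifted : Real.cos ((t - 1 / 2) * (Real.pi - dispersion a θ)) *
      Real.cos ((t - 1 / 2) * (Real.pi - dispersion a (θ + s))) =
      (Real.cos ((t - 1 / 2) * (dispersion a (θ + s) - dispersion a θ)) -
        Real.cos ((t - 1 / 2) * (dispersion a (θ + s) + dispersion a θ))) / 2 := by
    rw [product, ← Real.cos_neg ((t - 1 / 2) * (Real.pi - _ - _)), sub_eq_add_neg (Real.cos _),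
      ← cos_sub_half_mul_two_pi_sub]
    ring_nf
  rw [conj_halfLineMode_mul_halfLineMode_add, conj_halfLineMode_mul_halfLineMode_add,
    add_right_comm θ, dispersion_add_pi, dispersion_add_pi, ← Complex.ofReal_mul, product,
    ← Complex.ofReal_mul, shifted]
  push_cast
  ring

theorem norm_sq_halfLineMode_add_norm_sq_shift_pi (ha : |a| < 1) (hac : a * (1 + c ^ 2) = 2 * c)
    (t : ℕ) (θ : Momentum) :
    ‖halfLineMode a c t θ‖ ^ 2 + ‖halfLineMode a c t (θ + Real.pi)‖ ^ 2 =
      4 * momentumDensity a c θ := by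
  have product := conj_halfLineMode_mul_halfLineMode_add_shift_pi a c t 0 θ
  simp only [modeCorrelation_zero ha hac, momentumDensity_add_pi, add_zero, sub_self, mul_zero,
    Real.cos_zero, Complex.conj_mul'] at product
  apply Complex.ofReal_injective
  push_cast at product ⊢
  rw [product]
  ring

theorem integral_norm_sq_halfLineMode (ha : |a| < 1) (hc : |c| < 1)
    (hac : a * (1 + c ^ 2) = 2 * c) (t : ℕ) :
    ∫ θ, ‖halfLineMode a c t θ‖ ^ 2 ∂haarAddCircle =
      2 * ∫ θ, momentumDensity a c θ ∂haarAddCircle := by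
  have cont := continuous_halfLineMode ha hc t
  rw [integral_eq_half_integral_add_shift
    (integrable_haarAddCircle_of_continuous (by fun_prop)) Real.pi]
  simp only [norm_sq_halfLineMode_add_norm_sq_shift_pi ha hac, integral_const_mul, smul_eq_mul]
  ring

theorem integral_momentumDensity (ha : |a| < 1) (hc : |c| < 1)
    (hac : a * (1 + c ^ 2) = 2 * c) : ∫ θ, momentumDensity a c θ ∂haarAddCircle = 1 := by
  have parseval := hasSum_norm_sq_fourierCoeff (continuous_halfLineMode ha hc 0)
  rw [integral_norm_sq_halfLineMode ha hc hac] at parseval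
  linarith [parseval.unique (hasSum_norm_sq_extendedAmplitude_zero ha hc)]

theorem hasSum_norm_sq_extendedAmplitude (ha : |a| < 1) (hc : |c| < 1)
    (hac : a * (1 + c ^ 2) = 2 * c) (t : ℕ) :
    HasSum (fun n : ℤ ↦ ‖extendedAmplitude a c t n‖ ^ 2) 2 := by
  have parseval := hasSum_norm_sq_fourierCoeff (continuous_halfLineMode ha hc t)
  rwa [integral_norm_sq_halfLineMode ha hc hac, integral_momentumDensity ha hc hac,
    mul_one] at parseval

theorem tendsto_mul_dispersion_add_sub (ha : |a| < 1) (ξ : ℝ) (θ : Momentum) :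
    Tendsto (fun t : ℕ ↦ (t - 1 / 2) * (dispersion a (θ + (ξ / t : ℝ)) - dispersion a θ)) atTop
      (𝓝 (ξ * groupVelocity a θ)) := by
  have deriv := hasDerivAt_dispersion ha θ
  have slope := (deriv.hasFDerivAt.lim_real ξ).comp tendsto_natCast_atTop_atTop
  have increment := (deriv.continuousAt.tendsto.comp
    (tendsto_const_div_atTop_nhds_zero_nat ξ)).sub_const (dispersion a (θ + (0 : ℝ)))
  refine ((slope.sub (increment.const_mul (1 / 2))).congr fun t ↦ ?_).trans_eq ?_
  · simp only [Function.comp_apply, smul_eq_mul, inv_mul_eq_div, zero_add, AddCircle.coe_zero,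
      add_zero]
    ring
  · simp

theorem tendsto_conj_halfLineMode_mul_add_shift_pi (ha : |a| < 1) (hc : |c| < 1)
    (hac : a * (1 + c ^ 2) = 2 * c) (ξ : ℝ) (θ : Momentum) :
    Tendsto (fun t : ℕ ↦
      conj (halfLineMode a c t θ) * halfLineMode a c t (θ + (ξ / t : ℝ)) +
        conj (halfLineMode a c t (θ + Real.pi)) *
          halfLineMode a c t (θ + Real.pi + (ξ / t : ℝ))) atTop
      (𝓝 (4 * momentumDensity a c θ * Real.cos (ξ * groupVelocity a θ) : ℝ)) := by
  have shift_zero : Tendsto (fun t : ℕ ↦ ((ξ / t : ℝ) : Momentum)) atTop (𝓝 0) :=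
    ((AddCircle.continuous_mk' _).tendsto' 0 0 rfl).comp (tendsto_const_div_atTop_nhds_zero_nat ξ)
  have correlation := (tendsto_modeCorrelation ha hc hac θ).comp shift_zero
  have shifted := (tendsto_modeCorrelation ha hc hac (θ + Real.pi)).comp shift_zero
  rw [momentumDensity_add_pi] at shifted
  have slow := (Complex.continuous_ofReal.comp Real.continuous_cos).tendsto _ |>.comp
    (tendsto_mul_dispersion_add_sub ha ξ θ)
  have fast_bounded : IsBoundedUnder (· ≤ ·) atTop (norm ∘ fun t : ℕ ↦ (Real.cos ((t - 1 / 2) *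
      (dispersion a (θ + (ξ / t : ℝ)) + dispersion a θ)) / 2 : ℂ)) := by
    refine isBoundedUnder_of ⟨1 / 2, fun t ↦ ?_⟩
    rw [Function.comp_apply, norm_div, Complex.norm_real, Complex.norm_two]
    exact div_le_div_of_nonneg_right (Real.abs_cos_le_one _) two_pos.le
  have fast := isBoundedUnder_le_mul_tendsto_zero fast_bounded
    ((correlation.sub shifted).trans_eq (congrArg 𝓝 (sub_self _)))
  refine ((((slow.div_const 2).mul (correlation.add shifted)).add fast).congr fun t ↦
    (conj_halfLineMode_mul_halfLineMode_add_shift_pi a c t _ θ).symm).trans_eq ?_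
  simp only [Function.comp_apply]
  push_cast
  ring_nf

theorem tendsto_integral_conj_halfLineMode_mul (ha : |a| < 1) (hc : |c| < 1)
    (hac : a * (1 + c ^ 2) = 2 * c) (ξ : ℝ) :
    Tendsto (fun t : ℕ ↦ ∫ θ, conj (halfLineMode a c t θ) *
      halfLineMode a c t (θ + (ξ / t : ℝ)) ∂haarAddCircle) atTop
      (𝓝 (2 * ∫ θ, momentumDensity a c θ *
        Real.cos (ξ * groupVelocity a θ) ∂haarAddCircle : ℝ)) := by
  have cont (t : ℕ) := continuous_halfLineMode ha hc t
  obtain ⟨C, hC⟩ := isCompact_univ.exists_bound_of_continuousOn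
    (continuous_modeAmplitude ha hc).continuousOn
  have mode_le (t : ℕ) (θ : Momentum) : ‖halfLineMode a c t θ‖ ≤ C := by
    rw [halfLineMode_eq_modeAmplitude_mul_cos, norm_mul, Complex.norm_real]
    exact (mul_le_of_le_one_right (norm_nonneg _) (Real.abs_cos_le_one _)).trans (hC θ trivial)
  have product_le (t : ℕ) (θ φ : Momentum) :
      ‖conj (halfLineMode a c t θ) * halfLineMode a c t φ‖ ≤ C * C := by
    rw [norm_mul, RCLike.norm_conj]
    exact mul_le_mul (mode_le t θ) (mode_le t φ) (norm_nonneg _)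
      ((norm_nonneg _).trans (mode_le t θ))
  have dominated := tendsto_integral_of_dominated_convergence
    (μ := (haarAddCircle : Measure Momentum)) (fun _ ↦ C * C + C * C)
    (fun t ↦ (by fun_prop : Continuous _).aestronglyMeasurable) (integrable_const _)
    (fun t ↦ .of_forall fun θ ↦ norm_add_le_of_le (product_le t θ _) (product_le t _ _))
    (.of_forall (tendsto_conj_halfLineMode_mul_add_shift_pi ha hc hac ξ))
  refine ((dominated.const_smul (1 / 2 : ℝ)).congr fun t ↦ ?_).trans_eq ?_
  · exact (integral_eq_half_integral_add_shift
      (integrable_haarAddCircle_of_continuous (by fun_prop)) _).symm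
  · rw [integral_complex_ofReal, Complex.real_smul, ← Complex.ofReal_mul]
    simp only [mul_assoc (4 : ℝ), integral_const_mul]
    ring_nf

end Correlation

section LimitLaw

open AddCircle ComplexConjugate

variable {a c : ℝ}

/-- The distribution of the group velocity at a momentum with density `momentumDensity a c`. -/
def velocityLaw (a c : ℝ) : Measure ℝ :=
  (haarAddCircle.withDensity fun θ ↦ ENNReal.ofReal (momentumDensity a c θ)).map (groupVelocity a)

theorem isProbabilityMeasure_velocityLaw (ha : |a| < 1) (hc : |c| < 1)
    (hac : a * (1 + c ^ 2) = 2 * c) : IsProbabilityMeasure (velocityLaw a c) := by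
  have density : IsProbabilityMeasure
      (haarAddCircle.withDensity fun θ ↦ ENNReal.ofReal (momentumDensity a c θ)) := by
    constructor
    rw [withDensity_apply _ .univ, Measure.restrict_univ, ← ofReal_integral_eq_lintegral_ofReal
      (integrable_haarAddCircle_of_continuous (continuous_momentumDensity ha c))
      (.of_forall (momentumDensity_nonneg ha c)), integral_momentumDensity ha hc hac,
      ENNReal.ofReal_one]
  exact Measure.isProbabilityMeasure_map (continuous_groupVelocity ha).aemeasurable

theorem integral_velocityLaw {E : Type*} [NormedAddCommGroup E] [NormedSpace ℝ E] (ha : |a| < 1)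
    (c : ℝ) {g : ℝ → E} (hg : StronglyMeasurable g) :
    ∫ y, g y ∂velocityLaw a c =
      ∫ θ, momentumDensity a c θ • g (groupVelocity a θ) ∂haarAddCircle := by
  rw [velocityLaw, integral_map (continuous_groupVelocity ha).aemeasurable
    hg.aestronglyMeasurable, integral_withDensity_eq_integral_toReal_smul
    (continuous_momentumDensity ha c).measurable.ennreal_ofReal
    (.of_forall fun _ ↦ ENNReal.ofReal_lt_top)]
  simp only [ENNReal.toReal_ofReal (momentumDensity_nonneg ha c _)]

theorem charFun_velocityLaw (ha : |a| < 1) (c ξ : ℝ) :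
    charFun (velocityLaw a c) ξ =
      (∫ θ, momentumDensity a c θ * Real.cos (ξ * groupVelocity a θ) ∂haarAddCircle : ℝ) := by
  have density_cont := continuous_momentumDensity ha c
  have velocity_cont := continuous_groupVelocity ha
  rw [charFun_apply_real, integral_velocityLaw ha c (by fun_prop : Continuous _).stronglyMeasurable,
    integral_eq_half_integral_add_shift (integrable_haarAddCircle_of_continuous (by fun_prop))
      Real.pi, ← integral_smul, ← integral_complex_ofReal]
  refine integral_congr_ae (.of_forall fun θ ↦ ?_)
  simp only [momentumDensity_add_pi, groupVelocity_add_pi, Complex.real_smul]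
  push_cast
  rw [Complex.cos]
  ring_nf

theorem tendsto_tsum_norm_sq_extendedAmplitude_mul (ha : |a| < 1) (hc : |c| < 1)
    (hac : a * (1 + c ^ 2) = 2 * c) {g : ℝ → ℝ} (hg : Continuous g) {M : ℝ}
    (hM : ∀ y, |g y| ≤ M) :
    Tendsto (fun t : ℕ ↦ ∑' n : ℤ, ‖extendedAmplitude a c t n‖ ^ 2 / 2 * g (n / t)) atTop
      (𝓝 (∫ y, g y ∂velocityLaw a c)) := by
  have := isProbabilityMeasure_velocityLaw ha hc hac
  refine tendsto_tsum_mul_of_tendsto_charFun (fun t n ↦ by positivity)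
    (fun t ↦ ?_) (fun ξ ↦ ?_) hg hM
  · simpa using (hasSum_norm_sq_extendedAmplitude ha hc hac t).div_const 2
  · have lim := (tendsto_integral_conj_halfLineMode_mul ha hc hac ξ).div_const 2
    rw [charFun_velocityLaw ha]
    push_cast at lim ⊢
    rw [mul_div_cancel_left₀ _ two_ne_zero] at lim
    refine lim.congr fun t ↦ ?_
    rw [← (hasSum_fourier_mul_norm_sq_fourierCoeff (continuous_halfLineMode ha hc t) _).tsum_eq,
      ← tsum_div_const]
    refine tsum_congr fun n ↦ ?_
    have phase : 2 * Real.pi * Complex.I * n * (ξ / t : ℝ) / (2 * Real.pi : ℝ) =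
        ξ * (n / t : ℝ) * Complex.I := by
      have := Complex.ofReal_ne_zero.2 Real.pi_ne_zero
      push_cast
      field_simp
    rw [fourier_coe_apply, phase, extendedAmplitude]
    push_cast
    ring

end LimitLaw

section HalfLine

variable {a b c : ℝ}

theorem integral_comp_neg_velocityLaw {E : Type*} [NormedAddCommGroup E] [NormedSpace ℝ E]
    (ha : |a| < 1) (c : ℝ) {g : ℝ → E} (hg : StronglyMeasurable g) :
    ∫ y, g (-y) ∂velocityLaw a c = ∫ y, g y ∂velocityLaw a c := by
  rw [integral_velocityLaw ha c (g := fun y ↦ g (-y)) (hg.comp_measurable measurable_neg),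
    integral_velocityLaw ha c hg, ← integral_add_right_eq_self _ (Real.pi : Momentum)]
  simp only [momentumDensity_add_pi, groupVelocity_add_pi, neg_neg]

theorem two_mul_integral_comp_max_velocityLaw [IsProbabilityMeasure (velocityLaw a c)]
    (ha : |a| < 1) {g : ℝ → ℝ} (hg : Continuous g) (hg_zero : g 0 = 0) {M : ℝ}
    (hM : ∀ y, |g y| ≤ M) :
    2 * ∫ y, g (max y 0) ∂velocityLaw a c = ∫ y, g |y| ∂velocityLaw a c := by
  have integrable {p : ℝ → ℝ} (hp : Continuous p) :
      Integrable (fun y ↦ g (p y)) (velocityLaw a c) :=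
    .of_bound (hg.comp hp).aestronglyMeasurable M (.of_forall fun y ↦ hM (p y))
  have cont : Continuous fun y : ℝ ↦ g (max y 0) := by fun_prop
  have reflect := integral_comp_neg_velocityLaw ha c cont.stronglyMeasurable
  rw [two_mul]
  nth_rw 2 [← reflect]
  rw [← integral_add (integrable (by fun_prop)) (integrable (by fun_prop))]
  congr 1 with y
  obtain hy | hy := le_total 0 y
  · rw [max_eq_left hy, max_eq_right (neg_nonpos.2 hy), hg_zero, add_zero, abs_of_nonneg hy]
  · rw [max_eq_right hy, max_eq_left (neg_nonneg.2 hy), hg_zero, zero_add, abs_of_nonpos hy]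

theorem tendsto_tsum_norm_sq_foldedAmplitude_mul (ha : |a| < 1) (hab : a ^ 2 + b ^ 2 = 1)
    (hc : |c| < 1) (hac : a * c = 1 - b) (hac' : a * (1 + c ^ 2) = 2 * c)
    {g : ℝ → ℝ} (hg : Continuous g) (hg_zero : g 0 = 0) {M : ℝ} (hM : ∀ y, |g y| ≤ M) :
    Tendsto (fun t : ℕ ↦ ∑' n : ℕ, ‖foldedAmplitude a b 1 t n‖ ^ 2 * g (n / t)) atTop
      (𝓝 (∫ y, g |y| ∂velocityLaw a c)) := by
  have := isProbabilityMeasure_velocityLaw ha hc hac'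
  rw [← two_mul_integral_comp_max_velocityLaw ha hg hg_zero hM]
  refine ((tendsto_tsum_norm_sq_extendedAmplitude_mul ha hc hac'
    (hg.comp (by fun_prop : Continuous fun y : ℝ ↦ max y 0)) fun y ↦ hM _).const_mul 2).congr
    fun t ↦ ?_
  have left_vanishes (n : ℤ) (hn : n ∉ Set.range ((↑) : ℕ → ℤ)) :
      ‖extendedAmplitude a c t n‖ ^ 2 / 2 * g (max (n / t) 0) = 0 := by
    have neg : (n : ℝ) ≤ 0 := by
      by_contra! pos
      exact hn ⟨n.toNat, Int.toNat_of_nonneg (by exact_mod_cast pos.le)⟩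
    rw [max_eq_right (div_nonpos_of_nonpos_of_nonneg neg t.cast_nonneg), hg_zero, mul_zero]
  simp only [Function.comp_apply]
  rw [← Nat.cast_injective.tsum_eq (Function.support_subset_iff'.2 left_vanishes), ← tsum_mul_left]
  refine tsum_congr fun n ↦ ?_
  rw [foldedAmplitude_eq_extendedAmplitude ha hab hc hac, Int.cast_natCast,
    max_eq_left (by positivity)]
  ring

theorem tendsto_tsum_prob_mul (ha : |a| < 1) (hab : a ^ 2 + b ^ 2 = 1)
    (hc : |c| < 1) (hac : a * c = 1 - b) (hac' : a * (1 + c ^ 2) = 2 * c)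
    {g : ℝ → ℝ} (hg : Continuous g) {M : ℝ} (hM : ∀ y, |g y| ≤ M) :
    Tendsto (fun t : ℕ ↦ ∑' x : ℕ, prob a b 1 t x * g (x / t)) atTop
      (𝓝 (∫ y, g |y| ∂velocityLaw a c)) := by
  have := isProbabilityMeasure_velocityLaw ha hc hac'
  have centered_cont : Continuous fun y ↦ g y - g 0 := hg.sub continuous_const
  have folded := tendsto_tsum_norm_sq_foldedAmplitude_mul ha hab hc hac hac' centered_cont
    (sub_self _) fun y ↦ (abs_sub _ _).trans (add_le_add (hM y) (hM 0))
  have centered := (tendsto_tsum_prob_mul_sub_tsum_norm_sq_foldedAmplitude_mul hab (one_pow 2)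
    centered_cont.continuousOn).add folded
  have integrable : Integrable (fun y ↦ g |y|) (velocityLaw a c) :=
    .of_bound (by fun_prop : Continuous _).aestronglyMeasurable M (.of_forall fun y ↦ hM |y|)
  refine ((centered.add_const (g 0)).congr fun t ↦ ?_).trans_eq ?_
  · have mass := (hasSum_prob t hab (one_pow 2)).mul_right (g 0)
    have moment : Summable fun x ↦ prob a b 1 t x * g (x / t) :=
      summable_of_forall_psi a b 1 t fun x hx ↦ by simp [prob, hx]
    simp only [mul_sub, sub_add_cancel]
    rw [moment.tsum_sub mass.summable, mass.tsum_eq, one_mul, sub_add_cancel]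
  · rw [integral_sub integrable (integrable_const _), integral_const, probReal_univ, one_smul,
      zero_add, sub_add_cancel]

end HalfLine

section ChangeOfVariables

open Real.Angle (cos sin)

theorem integral_haarAddCircle_of_even_of_periodic_pi {E : Type*} [NormedAddCommGroup E]
    [NormedSpace ℝ E] {f : Momentum → E} (hf : Continuous f) (hf_even : ∀ θ, f (-θ) = f θ)
    (hf_pi : ∀ θ, f (θ + Real.pi) = f θ) :
    ∫ θ, f θ ∂AddCircle.haarAddCircle = (2 / Real.pi) • ∫ x : ℝ in 0..Real.pi / 2, f x := by
  have integrable (u v : ℝ) : IntervalIntegrable (fun x : ℝ ↦ f x) volume u v :=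
    (hf.comp (AddCircle.continuous_mk' _)).intervalIntegrable u v
  have periodic : Function.Periodic (fun x : ℝ ↦ f x) Real.pi := fun x ↦ hf_pi x
  have reflect (x : ℝ) : f (Real.pi - x : ℝ) = f x := by
    rw [sub_eq_neg_add, ← hf_even x]
    exact periodic (-x)
  have quarter : ∫ x : ℝ in Real.pi / 2..Real.pi, f x = ∫ x : ℝ in 0..Real.pi / 2, f x := by
    rw [← intervalIntegral.integral_congr fun x _ ↦ reflect x,
      intervalIntegral.integral_comp_sub_left (fun x : ℝ ↦ f x), sub_self, sub_half]
  have circle : ∫ θ, f θ = ∫ x : ℝ in 0..0 + (2 : ℤ) • Real.pi, f x := by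
    rw [← AddCircle.intervalIntegral_preimage _ 0, zsmul_eq_mul, Int.cast_ofNat]
  rw [AddCircle.integral_haarAddCircle, circle,
    periodic.intervalIntegral_add_zsmul_eq 2 0 integrable, zero_add,
    ← intervalIntegral.integral_add_adjacent_intervals (integrable 0 (Real.pi / 2))
      (integrable _ _), quarter]
  module

variable {a b c : ℝ}

theorem one_sub_groupVelocity_sq (ha : |a| < 1) (hab : a ^ 2 + b ^ 2 = 1) (θ : Momentum) :
    1 - groupVelocity a θ ^ 2 = b ^ 2 / (1 - (a * cos θ) ^ 2) := by
  have pos := one_sub_sq_mul_cos_pos ha θ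
  have pythagoras : cos θ ^ 2 + sin θ ^ 2 = 1 := Real.Angle.cos_sq_add_sin_sq θ
  rw [groupVelocity, div_pow, Real.sq_sqrt pos.le, eq_div_iff pos.ne', sub_mul,
    div_mul_cancel₀ _ pos.ne']
  linear_combination -a ^ 2 * pythagoras - hab

theorem sqrt_sq_sub_groupVelocity_sq (ha : |a| < 1) (hab : a ^ 2 + b ^ 2 = 1) {θ : Momentum}
    (h : 0 ≤ a * cos θ * b) :
    √(a ^ 2 - groupVelocity a θ ^ 2) = a * cos θ * b / √(1 - (a * cos θ) ^ 2) := by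
  have pos := one_sub_sq_mul_cos_pos ha θ
  have velocity := one_sub_groupVelocity_sq ha hab θ
  rw [eq_div_iff pos.ne'] at velocity
  rw [← Real.sqrt_sq (div_nonneg h (Real.sqrt_nonneg _)), div_pow, Real.sq_sqrt pos.le]
  congr 1
  rw [eq_div_iff pos.ne']
  linear_combination velocity + (1 - (a * cos θ) ^ 2) * hab

theorem momentumDensity_eq_groupVelocity_sq_div (ha : |a| < 1) (hab : a ^ 2 + b ^ 2 = 1)
    (hac : a * c = 1 - b) (hb : b ≠ 1) (θ : Momentum) :
    momentumDensity a c θ = groupVelocity a θ ^ 2 / (1 - b) := by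
  have pos := one_sub_sq_mul_cos_pos ha θ
  have : 1 - b ≠ 0 := sub_ne_zero.2 hb.symm
  rw [momentumDensity, groupVelocity, div_pow, Real.sq_sqrt pos.le, div_div,
    div_eq_div_iff (mul_ne_zero (by positivity) pos.ne') (mul_ne_zero pos.ne' this)]
  linear_combination
    -sin θ ^ 2 * (1 - (a * cos θ) ^ 2) * (hab + (a * c + 1 - b) * hac)

theorem hasDerivAt_groupVelocity (ha : |a| < 1) (x : ℝ) :
    HasDerivAt (fun x : ℝ ↦ groupVelocity a x)
      (a * Real.cos x * (1 - a ^ 2) / √(1 - (a * Real.cos x) ^ 2) ^ 3) x := by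
  have pos : 0 < 1 - (a * Real.cos x) ^ 2 := one_sub_sq_mul_cos_pos ha x
  have root_ne_zero := (Real.sqrt_pos.2 pos).ne'
  have root_deriv := ((((Real.hasDerivAt_cos x).const_mul a).pow 2).const_sub 1).sqrt pos.ne'
  refine (((Real.hasDerivAt_sin x).const_mul a).div root_deriv root_ne_zero).congr_deriv ?_
  have root_sq := Real.sq_sqrt pos.le
  simp only [Pi.pow_apply]
  generalize √(1 - (a * Real.cos x) ^ 2) = root at root_ne_zero root_sq ⊢
  field_simp
  linear_combination
    2 * a * Real.cos x * root_sq - 2 * a ^ 3 * Real.cos x * Real.sin_sq_add_cos_sq x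

theorem hasDerivAt_groupVelocity_eq_mul_sqrt (ha : |a| < 1) (hb : b ≠ 0) (hab : a ^ 2 + b ^ 2 = 1)
    {x : ℝ} (hx : 0 ≤ a * Real.cos x * b) :
    HasDerivAt (fun x : ℝ ↦ groupVelocity a x)
      ((1 - groupVelocity a x ^ 2) * √(a ^ 2 - groupVelocity a x ^ 2) / b) x := by
  have pos : 0 < 1 - (a * Real.cos x) ^ 2 := one_sub_sq_mul_cos_pos ha x
  have one_sub_sq : 1 - groupVelocity a x ^ 2 = b ^ 2 / √(1 - (a * Real.cos x) ^ 2) ^ 2 := by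
    rw [Real.sq_sqrt pos.le]
    exact one_sub_groupVelocity_sq ha hab x
  have sqrt_sq_sub : √(a ^ 2 - groupVelocity a x ^ 2) =
      a * Real.cos x * b / √(1 - (a * Real.cos x) ^ 2) := sqrt_sq_sub_groupVelocity_sq ha hab hx
  refine (hasDerivAt_groupVelocity ha x).congr_deriv ?_
  rw [one_sub_sq, sqrt_sq_sub, ← hab, add_sub_cancel_left, hab]
  field_simp

theorem strictMonoOn_groupVelocity (ha : 0 < a) (ha_lt : a < 1) :
    StrictMonoOn (fun x : ℝ ↦ groupVelocity a x) (Set.Icc 0 (Real.pi / 2)) := by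
  have abs_lt : |a| < 1 := by rwa [abs_of_pos ha]
  refine strictMonoOn_of_deriv_pos (convex_Icc _ _)
    ((continuous_groupVelocity abs_lt).comp (AddCircle.continuous_mk' _)).continuousOn
    fun x hx ↦ ?_
  rw [interior_Icc] at hx
  rw [(hasDerivAt_groupVelocity abs_lt x).deriv]
  have cos_pos : 0 < Real.cos x := Real.cos_pos_of_mem_Ioo ⟨by linarith [hx.1, Real.pi_pos], hx.2⟩
  have root_pos : 0 < √(1 - (a * Real.cos x) ^ 2) :=
    Real.sqrt_pos.2 (one_sub_sq_mul_cos_pos abs_lt x)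
  have : 0 < 1 - a ^ 2 := by nlinarith
  positivity

theorem image_groupVelocity_Ico (ha : 0 < a) (ha_lt : a < 1) :
    (fun x : ℝ ↦ groupVelocity a x) '' Set.Ico 0 (Real.pi / 2) = Set.Ico 0 a := by
  have cont : Continuous fun x : ℝ ↦ groupVelocity a x :=
    (continuous_groupVelocity (by rwa [abs_of_pos ha])).comp (AddCircle.continuous_mk' _)
  have mono := strictMonoOn_groupVelocity ha ha_lt
  have pos : 0 < Real.pi / 2 := Real.pi_div_two_pos
  refine Set.Subset.antisymm ?_ ?_
  · rintro _ ⟨x, hx, rfl⟩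
    refine ⟨(groupVelocity_zero a).ge.trans <|
      mono.monotoneOn ⟨le_rfl, pos.le⟩ (Set.Ico_subset_Icc_self hx) hx.1, ?_⟩
    exact (mono (Set.Ico_subset_Icc_self hx) ⟨pos.le, le_rfl⟩ hx.2).trans_eq
      (groupVelocity_pi_div_two a)
  · simpa only [groupVelocity_zero, groupVelocity_pi_div_two] using
      intermediate_value_Ico pos.le cont.continuousOn

theorem integral_comp_abs_velocityLaw (ha : 0 < a) (hb : 0 < b) (hab : a ^ 2 + b ^ 2 = 1)
    (hac : a * c = 1 - b) {g : ℝ → ℝ} (hg : Continuous g) :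
    ∫ y, g |y| ∂velocityLaw a c = ∫ y in Set.Ico 0 a,
      g y * (2 * b / (1 - b) * y ^ 2 / (Real.pi * (1 - y ^ 2) * √(a ^ 2 - y ^ 2))) := by
  have ha_lt : a < 1 := by nlinarith
  have abs_lt : |a| < 1 := by rwa [abs_of_pos ha]
  have hb_lt : b < 1 := by nlinarith
  have velocity_cont := continuous_groupVelocity abs_lt
  have cos_pos {x : ℝ} (hx : x ∈ Set.Ico 0 (Real.pi / 2)) : 0 < Real.cos x :=
    Real.cos_pos_of_mem_Ioo ⟨by linarith [hx.1, Real.pi_pos], hx.2⟩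
  have momentum_integral : ∫ y, g |y| ∂velocityLaw a c = 2 / Real.pi * ∫ x in 0..Real.pi / 2,
      groupVelocity a x ^ 2 / (1 - b) * g |groupVelocity a x| := by
    rw [integral_velocityLaw abs_lt c (g := fun y ↦ g |y|)
      (by fun_prop : Continuous _).stronglyMeasurable]
    simp only [momentumDensity_eq_groupVelocity_sq_div abs_lt hab hac hb_lt.ne, smul_eq_mul]
    exact integral_haarAddCircle_of_even_of_periodic_pi (by fun_prop)
      (fun θ ↦ by rw [groupVelocity_neg, neg_sq, abs_neg])
      fun θ ↦ by rw [groupVelocity_add_pi, neg_sq, abs_neg]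
  rw [momentum_integral, intervalIntegral.integral_of_le Real.pi_div_two_pos.le,
    ← integral_Ico_eq_integral_Ioc, ← integral_const_mul, ← image_groupVelocity_Ico ha ha_lt,
    integral_image_eq_integral_abs_deriv_smul measurableSet_Ico
      (fun x hx ↦ (hasDerivAt_groupVelocity_eq_mul_sqrt abs_lt hb.ne' hab
        (mul_pos (mul_pos ha (cos_pos hx)) hb).le).hasDerivWithinAt)
      ((strictMonoOn_groupVelocity ha ha_lt).injOn.mono Set.Ico_subset_Icc_self)]
  refine setIntegral_congr_fun measurableSet_Ico fun x hx ↦ ?_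
  have velocity_mem : groupVelocity a x ∈ Set.Ico 0 a :=
    image_groupVelocity_Ico ha ha_lt ▸ Set.mem_image_of_mem (fun x : ℝ ↦ groupVelocity a x) hx
  have one_sub_sq_pos : 0 < 1 - groupVelocity a x ^ 2 := by
    nlinarith [velocity_mem.1, velocity_mem.2]
  have sqrt_pos : 0 < √(a ^ 2 - groupVelocity a x ^ 2) :=
    Real.sqrt_pos.2 (sub_pos.2 (pow_lt_pow_left₀ velocity_mem.2 velocity_mem.1 two_ne_zero))
  have : 1 - b ≠ 0 := (sub_pos.2 hb_lt).ne'
  simp only [smul_eq_mul]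
  rw [abs_of_nonneg velocity_mem.1, abs_of_pos (by positivity)]
  field_simp

end ChangeOfVariables

section WeakConvergence

variable {a b : ℝ}

theorem tsum_prob_mul_congr (a b s : ℝ) (t : ℕ) {g h : ℝ → ℝ} (hgh : Set.EqOn g h (Set.Icc 0 1)) :
    ∑' x : ℕ, prob a b s t x * g (x / t) = ∑' x : ℕ, prob a b s t x * h (x / t) := by
  refine tsum_congr fun x ↦ ?_
  obtain beyond | within := lt_or_ge t x
  · simp [prob, psi_eq_zero_of_lt a b s beyond]
  · rw [hgh ⟨by positivity, div_le_one_of_le₀ (by exact_mod_cast within) t.cast_nonneg⟩]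

theorem tendsto_tsum_prob_mul_of_continuousOn (ha : 0 < a) (hb : 0 < b) (hab : a ^ 2 + b ^ 2 = 1)
    {g : ℝ → ℝ} (hg : ContinuousOn g (Set.Icc 0 1)) :
    Tendsto (fun t : ℕ ↦ ∑' x : ℕ, prob a b 1 t x * g (x / t)) atTop
      (𝓝 (∫ y in Set.Ico 0 a,
        g y * (2 * b / (1 - b) * y ^ 2 / (Real.pi * (1 - y ^ 2) * √(a ^ 2 - y ^ 2))))) := by
  obtain ⟨M, hM⟩ := isCompact_Icc.exists_bound_of_continuousOn hg
  let c := (1 - b) / a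
  have ha_lt : a < 1 := by nlinarith
  have abs_a_lt : |a| < 1 := by rwa [abs_of_pos ha]
  have hac : a * c = 1 - b := mul_div_cancel₀ _ ha.ne'
  have hac' : a * (1 + c ^ 2) = 2 * c := by
    apply mul_left_cancel₀ ha.ne'
    linear_combination hab + (a * c - 1 - b) * hac
  have abs_c_lt : |c| < 1 := by
    rw [abs_div, div_lt_one (abs_pos.2 ha.ne'), abs_of_pos ha, abs_of_pos] <;> nlinarith
  let G : ℝ → ℝ := Set.IccExtend zero_le_one ((Set.Icc 0 1).domRestrict g)
  have G_cont : Continuous G := hg.domRestrict.Icc_extend'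
  have G_eq : Set.EqOn G g (Set.Icc 0 1) := fun y hy ↦ Set.IccExtend_of_mem _ _ hy
  have limit := tendsto_tsum_prob_mul abs_a_lt hab abs_c_lt hac hac' G_cont
    fun y ↦ hM _ (Set.projIcc 0 1 zero_le_one y).2
  rw [integral_comp_abs_velocityLaw ha hb hab hac G_cont] at limit
  refine (limit.congr fun t ↦ tsum_prob_mul_congr a b 1 t G_eq).trans_eq ?_
  congr 1
  refine setIntegral_congr_fun measurableSet_Ico fun y hy ↦ ?_
  simp only [G_eq ⟨hy.1, hy.2.le.trans ha_lt.le⟩]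

theorem half_line_caseA_weak_convergence_general
    (κ : ℝ) (hκ : 2 < κ) (a b : ℝ)
    (ha : a = 2 * Real.sqrt (κ - 1) / κ) (hb : b = (κ - 2) / κ)
    (f : ℝ → ℝ)
    (hf : ∀ x : ℝ, f x = if 0 ≤ x ∧ x < a then
      (κ - 2) * x ^ 2 / (Real.pi * (1 - x ^ 2) * Real.sqrt (a ^ 2 - x ^ 2)) else 0)
    (g : ℝ → ℝ) (hg : ContinuousOn g (Set.Icc 0 1)) :
    Tendsto (fun t : ℕ ↦ ∑' x : ℕ, prob a b 1 t x * g ((x : ℝ) / (t : ℝ)))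
      atTop (𝓝 (∫ x in Set.Ico (0 : ℝ) a, g x * f x)) := by
  have κ_pos : 0 < κ := by linarith
  have sqrt_pos : 0 < √(κ - 1) := Real.sqrt_pos.2 (by linarith)
  have a_pos : 0 < a := by rw [ha]; positivity
  have b_pos : 0 < b := hb ▸ div_pos (sub_pos.2 hκ) κ_pos
  have hab : a ^ 2 + b ^ 2 = 1 := by
    rw [ha, hb, div_pow, div_pow, mul_pow, Real.sq_sqrt (by linarith)]
    field_simp
    ring
  have density_const : 2 * b / (1 - b) = κ - 2 := by
    rw [hb]
    field_simp
    ring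
  convert tendsto_tsum_prob_mul_of_continuousOn a_pos b_pos hab hg using 2
  refine setIntegral_congr_fun measurableSet_Ico fun x hx ↦ ?_
  simp only [hf, if_pos (show 0 ≤ x ∧ x < a from hx), density_const]

end WeakConvergence

/-- Weak convergence theorem, Case (A): with `s = +1`, `X_t/t` converges
weakly to the distribution with density `f_κ`: for every bounded continuous `g : ℝ → ℝ`,
`lim_{t→∞} ∑_{x∈ℤ₊} P(X_t = x)·g(x/t) = ∫_0^a g(x)·f_κ(x) dx`. -/
theorem half_line_caseA_weak_convergence
    (κ : ℕ) (hκ : 3 ≤ κ) (a b : ℝ)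
    (ha : a = 2 * Real.sqrt ((κ : ℝ) - 1) / κ) (hb : b = ((κ : ℝ) - 2) / κ)
    (f : ℝ → ℝ)
    (hf : ∀ x : ℝ, f x = if 0 ≤ x ∧ x < a then
      ((κ : ℝ) - 2) * x ^ 2 / (Real.pi * (1 - x ^ 2) * Real.sqrt (a ^ 2 - x ^ 2)) else 0)
    (g : ℝ → ℝ) (hg : Continuous g) (hgbd : ∃ M : ℝ, ∀ x : ℝ, |g x| ≤ M) :
    Tendsto (fun t : ℕ => ∑' x : ℕ, prob a b 1 t x * g ((x : ℝ) / (t : ℝ)))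
      atTop (𝓝 (∫ x in Set.Ico (0 : ℝ) a, g x * f x)) :=
  half_line_caseA_weak_convergence_general κ (by exact_mod_cast hκ) a b ha hb f hf g hg.continuousOn

end
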